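/- There exists d₀ such that for all d ≥ d₀ the following holds with n = 2^d and α = √n/2. There exists a pair of probability distributions (D₁, D₀) on functions z : ℤ₂^d → {0,1}, where D₁ is supported on functions that are far from periodic and D₀ is supported on periodic functions, such that for every conjunction C on the n input bits (z(x))_{x∈ℤ₂^d}, Pr_{z←D₀}( C(z) = 1 ) ≥ (1 − |C|/α) · Pr_{z←D₁}( C(z) = 1 ). -/

import Mathlib

/-!
Write `n = 2 ^ d`. The distribution `D₁` is uniform on the far-from-periodic functions; `D₀` picks a
uniform shift `y ≠ 0`, a uniform `z`, and outputs `z ∘ rep y`, where `rep y` sends each point to the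
chosen representative of its coset `{x, x + y}`.

* A conjunction of width `w` has exactly `2 ^ (n - w)` satisfying inputs (`card_conj`). Under `D₀` it
  keeps probability `2 ^ (-w)` for each `y` that is not a sum of two of its points, so for all but
  `w ^ 2` of the `n - 1` shifts (`card_good`).
* For fixed `y ≠ 0`, the distance of a uniform `z` to the `y`-periodic functions is binomial with
  `n / 2` fair trials. With `n = 8 k`, the Chernoff bound with parameter `1 / 3` shows that it is below
  `k` with probability at most `(3 * (2 / 3) ^ 4) ^ k = (16 / 27) ^ k` (`card_near_le`). A union bound
  over `y` gives that all but an `n * (16 / 27) ^ k` fraction of all functions are far from periodic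
  (`card_far`), and this fraction is at most `1 / √n` for large `d` (`exists_threshold`).

Hence `Pr_{D₁}(C) ≤ 2 ^ (-w) / (1 - 1 / √n)` and, when `w < √n / 2`,
`Pr_{D₀}(C) ≥ 2 ^ (-w) * (1 - w / √n)`. The claim follows from
`(1 - w / √n) * (1 - 1 / √n) ≥ 1 - 2 * w / √n` for `w ≥ 1`; for `w ≥ √n / 2` or `w = 0` it is trivial.
-/

open scoped Classical
open Finset

/-- A function `z : ℤ₂^d → {0,1}` is periodic if some nonzero `y` satisfies
`z(x+y) = z(x)` for all `x`. -/
def IsPeriodic {d : ℕ} (z : (Fin d → ZMod 2) → Bool) : Prop :=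
  ∃ y : Fin d → ZMod 2, y ≠ 0 ∧ ∀ x, z (x + y) = z x

/-- `z` is far from periodic if its Hamming distance to every periodic function is
at least `n/8`, where `n = 2^d`. -/
def FarFromPeriodic {d : ℕ} (z : (Fin d → ZMod 2) → Bool) : Prop :=
  ∀ z' : (Fin d → ZMod 2) → Bool, IsPeriodic z' →
    (2 : ℝ) ^ d / 8 ≤ ((Finset.univ.filter (fun x => z x ≠ z' x)).card : ℝ)

/-! ### Cosets of a shift -/

/-- A set of representatives of the cosets of `{0, y}` (for `y ≠ 0`): the points vanishing at a fixed
coordinate where `y` does not. -/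
noncomputable def halfSet {d : ℕ} (y : Fin d → ZMod 2) : Finset (Fin d → ZMod 2) :=
  Finset.univ.filter fun x => ∃ h : ∃ i, y i ≠ 0, x h.choose = 0

/-- The representative in `halfSet y` of the coset `{x, x + y}`. -/
noncomputable def rep {d : ℕ} (y x : Fin d → ZMod 2) : Fin d → ZMod 2 :=
  if x ∈ halfSet y then x else x + y

lemma add_self_two {d : ℕ} (y : Fin d → ZMod 2) : y + y = 0 := by
  funext i
  exact CharTwo.add_self_eq_zero (y i)

lemma add_add_cancel_two {d : ℕ} (x y : Fin d → ZMod 2) : x + y + y = x := by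
  rw [add_assoc, add_self_two, add_zero]

lemma add_mem_halfSet {d : ℕ} {y : Fin d → ZMod 2} (hy : y ≠ 0) (x : Fin d → ZMod 2) :
    x + y ∈ halfSet y ↔ x ∉ halfSet y := by
  have h : ∃ i, y i ≠ 0 := Function.ne_iff.mp hy
  have key : ∀ a b : ZMod 2, b ≠ 0 → (a + b = 0 ↔ ¬ a = 0) := by decide
  have h2 := key (x h.choose) (y h.choose) h.choose_spec
  simp only [halfSet, Finset.mem_filter, Finset.mem_univ, true_and, Pi.add_apply,
    exists_prop_of_true h]
  exact h2

lemma card_cube (d : ℕ) : Fintype.card (Fin d → ZMod 2) = 2 ^ d := by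
  simp [ZMod.card]

lemma card_halfSet {d : ℕ} {y : Fin d → ZMod 2} (hy : y ≠ 0) :
    (halfSet y)ᶜ.card = (halfSet y).card := by
  apply Finset.card_bij' (fun x _ => x + y) (fun x _ => x + y)
  · intro x hx
    rw [add_mem_halfSet hy]
    simpa using hx
  · intro x hx
    rw [Finset.mem_compl, add_mem_halfSet hy]
    simpa using hx
  · intro x _
    exact add_add_cancel_two x y
  · intro x _
    exact add_add_cancel_two x y

lemma rep_add {d : ℕ} {y : Fin d → ZMod 2} (hy : y ≠ 0) (x : Fin d → ZMod 2) :
    rep y (x + y) = rep y x := by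
  unfold rep
  by_cases h : x ∈ halfSet y
  · have h' : x + y ∉ halfSet y := by rw [add_mem_halfSet hy]; simpa using h
    rw [if_neg h', if_pos h, add_add_cancel_two]
  · have h' : x + y ∈ halfSet y := by rwa [add_mem_halfSet hy]
    rw [if_pos h', if_neg h]

lemma eq_or_add_eq_of_rep_eq {d : ℕ} {y a b : Fin d → ZMod 2} (h : rep y a = rep y b) :
    a = b ∨ a + b = y := by
  have e1 : a + y = b → a + b = y := by
    rintro rfl
    rw [← add_assoc, add_self_two, zero_add]
  unfold rep at h
  split_ifs at h
  · exact Or.inl h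
  · refine Or.inr ?_
    rw [h, add_right_comm, add_self_two, zero_add]
  · exact Or.inr (e1 h)
  · exact Or.inl (add_right_cancel h)

/-! ### Counting the inputs of a conjunction -/

lemma card_conj {V : Type*} [Fintype V] [DecidableEq V] {w : ℕ} {p : Fin w → V}
    (hp : Function.Injective p) (b : Fin w → Bool) :
    (Finset.univ.filter fun z : V → Bool => ∀ j, z (p j) = b j).card * 2 ^ w
      = 2 ^ Fintype.card V := by
  have h1 : (Finset.univ.filter fun z : V → Bool => ∀ j, z (p j) = b j) =
      Fintype.piFinset (fun x => Finset.univ.filter fun c : Bool => ∀ j, p j = x → c = b j) := by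
    ext z
    simp only [Finset.mem_filter, Finset.mem_univ, true_and, Fintype.mem_piFinset]
    constructor
    · rintro h x j rfl
      exact h j
    · intro h j
      exact h _ j rfl
  have h2 : ∀ x, (Finset.univ.filter fun c : Bool => ∀ j, p j = x → c = b j).card =
      if x ∈ Finset.univ.image p then 1 else 2 := by
    intro x
    split_ifs with hx
    · obtain ⟨j, -, rfl⟩ := Finset.mem_image.mp hx
      rw [Finset.card_eq_one]
      refine ⟨b j, ?_⟩
      ext c
      simp only [Finset.mem_filter, Finset.mem_univ, true_and, Finset.mem_singleton]
      constructor
      · intro h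
        exact h j rfl
      · rintro rfl i hi
        rw [hp hi]
    · rw [Finset.filter_true_of_mem]
      · simp
      · intro c _ j hj
        exact absurd (Finset.mem_image.mpr ⟨j, Finset.mem_univ _, hj⟩) hx
  have h3 : (Finset.univ.image p).card = w := by
    rw [Finset.card_image_of_injective _ hp]; simp
  rw [h1, Fintype.card_piFinset, Finset.prod_congr rfl (fun x _ => h2 x), Finset.prod_ite]
  simp only [Finset.prod_const, one_pow, one_mul]
  rw [← pow_add]
  congr 1
  have h4 := Finset.card_filter_add_card_filter_not (s := (Finset.univ : Finset V))
    (fun x => x ∈ Finset.univ.image p)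
  have h5 : (Finset.univ.filter fun x => x ∈ Finset.univ.image p) = Finset.univ.image p := by
    ext; simp
  rw [h5, h3, Finset.card_univ] at h4
  omega

lemma card_conj_cube {d w : ℕ} {p : Fin w → (Fin d → ZMod 2)}
    (hp : Function.Injective p) (b : Fin w → Bool) :
    ((Finset.univ.filter fun z : (Fin d → ZMod 2) → Bool => ∀ j, z (p j) = b j).card : ℝ)
      = 2 ^ (2 ^ d) / 2 ^ w := by
  have h := card_conj hp b
  rw [card_cube] at h
  rw [eq_div_iff (by positivity)]
  exact_mod_cast h

/-! ### Most functions are far from periodic -/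

/-- For `y ≠ 0`, the distance of `z` to the `y`-periodic functions: the number of cosets of
`{0, y}` on which `z` is not constant. -/
noncomputable def pairDist {d : ℕ} (y : Fin d → ZMod 2) (z : (Fin d → ZMod 2) → Bool) : ℕ :=
  ((halfSet y)ᶜ.filter fun x => z x ≠ z (x + y)).card

lemma pairDist_le {d : ℕ} {y : Fin d → ZMod 2} (hy : y ≠ 0) (z z' : (Fin d → ZMod 2) → Bool)
    (hz : ∀ x, z' (x + y) = z' x) :
    pairDist y z ≤ (Finset.univ.filter (fun x => z x ≠ z' x)).card := by
  apply Finset.card_le_card_of_injOn (fun x => if z x ≠ z' x then x else x + y)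
  · intro x hx
    have hx := (Finset.mem_filter.mp hx).2
    simp only [Finset.coe_filter, Finset.mem_univ, true_and, Set.mem_ofPred_eq]
    split_ifs with h
    · exact h
    · rw [hz]
      intro h'
      exact hx ((not_not.mp h).trans h'.symm)
  · intro a ha b hb hab
    have ha := (Finset.mem_compl.mp (Finset.mem_filter.mp ha).1)
    have hb := (Finset.mem_compl.mp (Finset.mem_filter.mp hb).1)
    have ha' := (add_mem_halfSet hy a).2 ha
    have hb' := (add_mem_halfSet hy b).2 hb
    simp only at hab
    split_ifs at hab
    · exact hab
    · exact absurd (hab ▸ hb') ha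
    · exact absurd (hab ▸ ha') hb
    · exact add_right_cancel hab

/-- The involution of the function space under which `pairDist y` becomes the number of ones outside
`halfSet y`, so that its law under the uniform measure is visibly binomial. -/
noncomputable def twist {d : ℕ} (y : Fin d → ZMod 2) (z : (Fin d → ZMod 2) → Bool)
    (x : Fin d → ZMod 2) : Bool :=
  if x ∈ halfSet y then z x else xor (z x) (z (x + y))

lemma twist_involutive {d : ℕ} {y : Fin d → ZMod 2} (hy : y ≠ 0) :
    Function.Involutive (twist y) := by
  intro z
  funext x
  by_cases h : x ∈ halfSet y
  · simp [twist, h]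
  · have hadd := (add_mem_halfSet hy x).2 h
    simp [twist, h, hadd]

/-- The moment generating function of `pairDist y`. -/
lemma sum_pow_pairDist {d : ℕ} {y : Fin d → ZMod 2} (hy : y ≠ 0) (c : ℝ) :
    ∑ z, c ^ pairDist y z = (1 + c) ^ (halfSet y).card * 2 ^ (halfSet y).card := by
  have h1 : ∀ z, c ^ pairDist y z =
      ∏ x, (if x ∉ halfSet y ∧ twist y z x = true then c else 1) := by
    intro z
    rw [Finset.prod_ite]
    simp only [Finset.prod_const, one_pow, mul_one, pairDist]
    congr 2
    ext x
    simp only [Finset.mem_filter, Finset.mem_compl, Finset.mem_univ, true_and]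
    refine and_congr_right fun hx => ?_
    simp [twist, hx]
  have h2 := (Equiv.sum_comp (twist_involutive hy).toPerm
    (fun z => ∏ x, (if x ∉ halfSet y ∧ z x = true then c else 1)))
  have h3 := Finset.prod_univ_sum (fun _ : Fin d → ZMod 2 => (Finset.univ : Finset Bool))
    (fun x b => if x ∉ halfSet y ∧ b = true then c else 1)
  rw [Fintype.piFinset_univ] at h3
  calc ∑ z, c ^ pairDist y z
      = ∑ z, ∏ x, (if x ∉ halfSet y ∧ twist y z x = true then c else 1) :=
        Finset.sum_congr rfl fun z _ => h1 z
    _ = ∑ z : (Fin d → ZMod 2) → Bool, ∏ x, (if x ∉ halfSet y ∧ z x = true then c else 1) := h2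
    _ = ∏ x, ∑ b : Bool, (if x ∉ halfSet y ∧ b = true then c else 1) := h3.symm
    _ = ∏ x, (if x ∈ (halfSet y)ᶜ then 1 + c else 2) := by
        refine Finset.prod_congr rfl fun x _ => ?_
        by_cases hx : x ∈ halfSet y
        · simp [hx]
        · simp [hx, add_comm]
    _ = _ := by
        rw [Finset.prod_ite]
        simp only [Finset.prod_const]
        congr 2
        · rw [← card_halfSet hy]; congr 1; ext; simp
        · congr 1; ext; simp

/-- Chernoff bound for `pairDist y`. -/
lemma card_near_le {d k : ℕ} (hk : 2 ^ d = 8 * k) {y : Fin d → ZMod 2} (hy : y ≠ 0) :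
    ((Finset.univ.filter fun z => pairDist y z < k).card : ℝ)
      ≤ 2 ^ (2 ^ d) * (16 / 27 : ℝ) ^ k := by
  have hH : (halfSet y).card = 4 * k := by
    have h1 := Finset.card_add_card_compl (halfSet y)
    rw [card_halfSet hy, card_cube] at h1
    omega
  have h1 := sum_pow_pairDist hy (1 / 3)
  have h2 : ((Finset.univ.filter fun z => pairDist y z < k).card : ℝ) * (1 / 3) ^ k
      ≤ ∑ z, (1 / 3 : ℝ) ^ pairDist y z := by
    rw [← nsmul_eq_mul]
    refine (Finset.card_nsmul_le_sum _ (fun z => (1 / 3 : ℝ) ^ pairDist y z) _ ?_).trans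
      (Finset.sum_le_sum_of_subset_of_nonneg (Finset.filter_subset _ _) fun _ _ _ => by positivity)
    intro z hz
    exact pow_le_pow_of_le_one (by norm_num) (by norm_num) (Finset.mem_filter.mp hz).2.le
  rw [h1, hH] at h2
  rw [hk]
  have h3 : ((1 + 1 / 3 : ℝ)) ^ (4 * k) * 2 ^ (4 * k)
      = (2 ^ (8 * k) * (16 / 27 : ℝ) ^ k) * (1 / 3) ^ k := by
    simp only [pow_mul, ← mul_pow]
    norm_num
  rw [h3] at h2
  exact le_of_mul_le_mul_right h2 (by positivity)

lemma card_far {d k : ℕ} (hk : 2 ^ d = 8 * k) :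
    (2 : ℝ) ^ (2 ^ d) * (1 - 2 ^ d * (16 / 27 : ℝ) ^ k) ≤
      (Finset.univ.filter fun z : (Fin d → ZMod 2) → Bool => FarFromPeriodic z).card := by
  have h1 : (Finset.univ.filter fun z : (Fin d → ZMod 2) → Bool => ¬ FarFromPeriodic z) ⊆
      (Finset.univ.filter fun y : Fin d → ZMod 2 => y ≠ 0).biUnion
        fun y => Finset.univ.filter fun z => pairDist y z < k := by
    intro z hz
    have hz := (Finset.mem_filter.mp hz).2
    unfold FarFromPeriodic at hz
    push Not at hz
    obtain ⟨z', ⟨y, hy, hp⟩, hlt⟩ := hz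
    simp only [Finset.mem_biUnion, Finset.mem_filter, Finset.mem_univ, true_and]
    refine ⟨y, hy, ?_⟩
    have hk' : (2 : ℝ) ^ d / 8 = k := by
      have : (2 : ℝ) ^ d = 8 * k := by exact_mod_cast hk
      rw [this]; ring
    rw [hk'] at hlt
    exact (pairDist_le hy z z' hp).trans_lt (by exact_mod_cast hlt)
  have h2 : ((Finset.univ.filter fun z : (Fin d → ZMod 2) → Bool => ¬ FarFromPeriodic z).card : ℝ)
      ≤ 2 ^ d * (2 ^ (2 ^ d) * (16 / 27 : ℝ) ^ k) := by
    calc _ ≤ ((∑ y ∈ Finset.univ.filter fun y : Fin d → ZMod 2 => y ≠ 0,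
          (Finset.univ.filter fun z => pairDist y z < k).card : ℕ) : ℝ) := by
            exact_mod_cast (Finset.card_le_card h1).trans Finset.card_biUnion_le
      _ ≤ ∑ y ∈ Finset.univ.filter fun y : Fin d → ZMod 2 => y ≠ 0,
          (2 ^ (2 ^ d) * (16 / 27 : ℝ) ^ k) := by
            push_cast
            exact Finset.sum_le_sum fun y hy => card_near_le hk (Finset.mem_filter.mp hy).2
      _ ≤ ∑ y : Fin d → ZMod 2, (2 ^ (2 ^ d) * (16 / 27 : ℝ) ^ k) :=
            Finset.sum_le_sum_of_subset_of_nonneg (Finset.filter_subset _ _)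
              fun _ _ _ => by positivity
      _ = _ := by
            rw [Finset.sum_const, Finset.card_univ, card_cube, nsmul_eq_mul]
            push_cast
            ring
  have h3 : ((Finset.univ.filter fun z : (Fin d → ZMod 2) → Bool => FarFromPeriodic z).card : ℝ) +
      (Finset.univ.filter fun z : (Fin d → ZMod 2) → Bool => ¬ FarFromPeriodic z).card
      = 2 ^ (2 ^ d) := by
    have := Finset.card_filter_add_card_filter_not
      (s := (Finset.univ : Finset ((Fin d → ZMod 2) → Bool))) (fun z => FarFromPeriodic z)
    rw [Finset.card_univ, Fintype.card_fun, card_cube, Fintype.card_bool] at this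
    exact_mod_cast this
  linarith

/-! ### The random periodic function -/

/-- All but `w ^ 2` of the nonzero shifts keep the `w` points in distinct cosets. -/
lemma card_good {d w : ℕ} {pts : Fin w → (Fin d → ZMod 2)} (hp : Function.Injective pts) :
    2 ^ d ≤ ((Finset.univ.filter fun y : Fin d → ZMod 2 => y ≠ 0).filter
      fun y => Function.Injective fun j => rep y (pts j)).card + w ^ 2 + 1 := by
  have h1 : (Finset.univ.filter fun y : Fin d → ZMod 2 => y ≠ 0).filter
      (fun y => ¬ Function.Injective fun j => rep y (pts j)) ⊆
      (Finset.univ : Finset (Fin w × Fin w)).image fun q => pts q.1 + pts q.2 := by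
    intro y hy
    have hy := (Finset.mem_filter.mp hy).2
    unfold Function.Injective at hy
    push Not at hy
    obtain ⟨i, j, hij, hne⟩ := hy
    refine Finset.mem_image.mpr ⟨(i, j), Finset.mem_univ _, ?_⟩
    exact (eq_or_add_eq_of_rep_eq hij).resolve_left fun h => hne (hp h)
  have h2 := (Finset.card_le_card h1).trans Finset.card_image_le
  rw [Finset.card_univ, Fintype.card_prod, Fintype.card_fin, ← sq] at h2
  have h3 := Finset.card_filter_add_card_filter_not
    (s := Finset.univ.filter fun y : Fin d → ZMod 2 => y ≠ 0)
    (fun y => Function.Injective fun j => rep y (pts j))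
  have h4 : (Finset.univ.filter fun y : Fin d → ZMod 2 => y ≠ 0).card + 1 = 2 ^ d := by
    rw [Finset.filter_ne', Finset.card_erase_of_mem (Finset.mem_univ _), Finset.card_univ, card_cube]
    have := Nat.one_le_two_pow (n := d)
    omega
  omega

/-- The law of `z ∘ rep y` for a uniform nonzero `y` and a uniform `z`. -/
noncomputable def perDist (d : ℕ) (z : (Fin d → ZMod 2) → Bool) : ℝ :=
  (∑ y ∈ Finset.univ.filter fun y : Fin d → ZMod 2 => y ≠ 0,
    ((Finset.univ.filter fun u : (Fin d → ZMod 2) → Bool => (fun x => u (rep y x)) = z).card : ℝ))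
    / ((2 ^ d - 1) * 2 ^ (2 ^ d))

lemma sum_perDist (d : ℕ) (P : ((Fin d → ZMod 2) → Bool) → Prop) [DecidablePred P] :
    ∑ z ∈ Finset.univ.filter P, perDist d z =
      (∑ y ∈ Finset.univ.filter fun y : Fin d → ZMod 2 => y ≠ 0,
        ((Finset.univ.filter fun u : (Fin d → ZMod 2) → Bool =>
          P fun x => u (rep y x)).card : ℝ)) / ((2 ^ d - 1) * 2 ^ (2 ^ d)) := by
  unfold perDist
  rw [← Finset.sum_div, Finset.sum_comm]
  congr 1
  refine Finset.sum_congr rfl fun y _ => ?_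
  have := Finset.card_eq_sum_card_fiberwise
    (s := Finset.univ.filter fun u : (Fin d → ZMod 2) → Bool => P fun x => u (rep y x))
    (t := Finset.univ.filter P) (f := fun u x => u (rep y x))
    (by intro u hu; simpa using hu)
  rw [this]
  push_cast
  refine Finset.sum_congr rfl fun z hz => ?_
  congr 2
  ext u
  simp only [Finset.mem_filter, Finset.mem_univ, true_and]
  constructor
  · rintro rfl
    exact ⟨(Finset.mem_filter.mp hz).2, rfl⟩
  · exact fun h => h.2

lemma card_nonzero (d : ℕ) :
    ((Finset.univ.filter fun y : Fin d → ZMod 2 => y ≠ 0).card : ℝ) = 2 ^ d - 1 := by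
  rw [Finset.filter_ne', Finset.cast_card_erase_of_mem (Finset.mem_univ _), Finset.card_univ,
    card_cube]
  push_cast
  ring

lemma sum_perDist_univ {d : ℕ} (hd : 1 ≤ d) : ∑ z, perDist d z = 1 := by
  have hn : (2 : ℝ) ≤ 2 ^ d := by
    calc (2 : ℝ) = 2 ^ 1 := by norm_num
      _ ≤ 2 ^ d := pow_le_pow_right₀ (by norm_num) hd
  have h := sum_perDist d (fun _ => True)
  have hc : ((Finset.univ : Finset ((Fin d → ZMod 2) → Bool)).card : ℝ) = 2 ^ (2 ^ d) := by
    rw [Finset.card_univ, Fintype.card_fun, card_cube, Fintype.card_bool]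
    push_cast
    rfl
  simp only [Finset.filter_true, Finset.sum_const, nsmul_eq_mul, card_nonzero, hc] at h
  rw [h]
  refine div_self (mul_ne_zero ?_ (by positivity))
  linarith

lemma perDist_periodic {d : ℕ} {z : (Fin d → ZMod 2) → Bool} (h : perDist d z ≠ 0) :
    IsPeriodic z := by
  unfold perDist at h
  obtain ⟨y, hy, hc⟩ := Finset.exists_ne_zero_of_sum_ne_zero (div_ne_zero_iff.mp h).1
  have hc : (Finset.univ.filter fun u : (Fin d → ZMod 2) → Bool =>
      (fun x => u (rep y x)) = z).card ≠ 0 := by exact_mod_cast hc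
  obtain ⟨u, hu⟩ := Finset.card_ne_zero.mp hc
  have hy := (Finset.mem_filter.mp hy).2
  have hu := (Finset.mem_filter.mp hu).2
  refine ⟨y, hy, fun x => ?_⟩
  rw [← hu]
  simp only [rep_add hy]

lemma perDist_conj {d w : ℕ} (hd : 1 ≤ d) {pts : Fin w → (Fin d → ZMod 2)}
    (hp : Function.Injective pts) (bits : Fin w → Bool) :
    (2 ^ d - 1 - (w : ℝ) ^ 2) / (2 ^ d - 1) / 2 ^ w ≤
      ∑ z ∈ Finset.univ.filter
        (fun z : (Fin d → ZMod 2) → Bool => ∀ j, z (pts j) = bits j), perDist d z := by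
  have hn : (2 : ℝ) ≤ 2 ^ d := by
    calc (2 : ℝ) = 2 ^ 1 := by norm_num
      _ ≤ 2 ^ d := pow_le_pow_right₀ (by norm_num) hd
  rw [sum_perDist d fun z => ∀ j, z (pts j) = bits j]
  have h1 : ((2 : ℝ) ^ d - 1 - (w : ℝ) ^ 2) * (2 ^ (2 ^ d) / 2 ^ w) ≤
      ∑ y ∈ Finset.univ.filter fun y : Fin d → ZMod 2 => y ≠ 0,
        ((Finset.univ.filter fun u : (Fin d → ZMod 2) → Bool =>
          ∀ j, u (rep y (pts j)) = bits j).card : ℝ) := by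
    calc _ ≤ (((Finset.univ.filter fun y : Fin d → ZMod 2 => y ≠ 0).filter
          fun y => Function.Injective fun j => rep y (pts j)).card : ℝ)
            * (2 ^ (2 ^ d) / 2 ^ w) := by
          gcongr
          have : (2 : ℝ) ^ d ≤ (((Finset.univ.filter fun y : Fin d → ZMod 2 => y ≠ 0).filter
            fun y => Function.Injective fun j => rep y (pts j)).card : ℝ) + w ^ 2 + 1 := by
            exact_mod_cast card_good hp
          linarith
      _ = ∑ y ∈ (Finset.univ.filter fun y : Fin d → ZMod 2 => y ≠ 0).filter
          fun y => Function.Injective fun j => rep y (pts j),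
        ((Finset.univ.filter fun u : (Fin d → ZMod 2) → Bool =>
          ∀ j, u (rep y (pts j)) = bits j).card : ℝ) := by
          rw [← nsmul_eq_mul, ← Finset.sum_const]
          refine Finset.sum_congr rfl fun y hy => ?_
          exact (card_conj_cube (Finset.mem_filter.mp hy).2 bits).symm
      _ ≤ _ := Finset.sum_le_sum_of_subset_of_nonneg (Finset.filter_subset _ _)
          fun _ _ _ => by positivity
  have hn1 : (0 : ℝ) < 2 ^ d - 1 := by linarith
  calc _ = ((2 : ℝ) ^ d - 1 - (w : ℝ) ^ 2) * (2 ^ (2 ^ d) / 2 ^ w)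
        / ((2 ^ d - 1) * 2 ^ (2 ^ d)) := by
        field_simp
    _ ≤ _ := by gcongr

/-! ### The theorem -/

/-- The Chernoff rate beats the union bound. -/
lemma exists_threshold : ∃ K : ℕ, ∀ k ≥ K, (8 * k : ℝ) ^ 2 * (16 / 27 : ℝ) ^ k ≤ 1 := by
  have h := tendsto_pow_const_mul_const_pow_of_abs_lt_one 2
    (r := (16 / 27 : ℝ)) (by rw [abs_of_pos] <;> norm_num)
  have h2 := h.eventually (ge_mem_nhds (show (0 : ℝ) < 1 / 64 by norm_num))
  obtain ⟨K, hK⟩ := Filter.eventually_atTop.mp h2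
  refine ⟨K, fun k hk => ?_⟩
  have := hK k hk
  nlinarith

/-- for all sufficiently large `d` (with `n = 2^d`, `α = √n/2`) there
are distributions `D₁` supported on far-from-periodic functions and `D₀` supported
on periodic functions such that every conjunction `C` — specified by `|C|` distinct
points `pts` and prescribed bits `bits` — satisfies
`Pr_{z←D₀}(C(z)=1) ≥ (1 − |C|/α)·Pr_{z←D₁}(C(z)=1)`. -/
theorem stmt_17 :
    ∃ d₀ : ℕ, ∀ d : ℕ, d₀ ≤ d →
      ∃ D1 D0 : ((Fin d → ZMod 2) → Bool) → ℝ,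
        (∀ z, 0 ≤ D1 z) ∧ (∑ z, D1 z = 1) ∧
        (∀ z, 0 ≤ D0 z) ∧ (∑ z, D0 z = 1) ∧
        (∀ z, D1 z ≠ 0 → FarFromPeriodic z) ∧
        (∀ z, D0 z ≠ 0 → IsPeriodic z) ∧
        ∀ (w : ℕ) (pts : Fin w → (Fin d → ZMod 2)), Function.Injective pts →
          ∀ bits : Fin w → Bool,
            (1 - (w : ℝ) / (Real.sqrt ((2 : ℝ) ^ d) / 2)) *
                (∑ z ∈ Finset.univ.filter
                  (fun z : (Fin d → ZMod 2) → Bool => ∀ j, z (pts j) = bits j), D1 z) ≤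
              ∑ z ∈ Finset.univ.filter
                (fun z : (Fin d → ZMod 2) → Bool => ∀ j, z (pts j) = bits j), D0 z := by
  obtain ⟨K, hK⟩ := exists_threshold
  refine ⟨K + 3, fun d hd => ?_⟩
  obtain ⟨e, rfl⟩ : ∃ e, d = e + 3 := ⟨d - 3, by omega⟩
  have hk : 2 ^ (e + 3) = 8 * 2 ^ e := by ring
  have hr := hK (2 ^ e) (by have := Nat.lt_two_pow_self (n := e); omega)
  have hfar := card_far hk
  have h8 : (8 * ((2 ^ e : ℕ) : ℝ)) = 2 ^ (e + 3) := by push_cast; ring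
  rw [h8] at hr
  have hn8 : (8 : ℝ) ≤ 2 ^ (e + 3) := by
    rw [pow_add]
    have : (1 : ℝ) ≤ 2 ^ e := one_le_pow₀ (by norm_num)
    linarith
  set d := e + 3 with hd'
  set F := Finset.univ.filter fun z : (Fin d → ZMod 2) → Bool => FarFromPeriodic z with hF
  set n : ℝ := 2 ^ d with hn
  set s := Real.sqrt n with hs
  have hss : s * s = n := Real.mul_self_sqrt (by linarith)
  have hs0 : 0 ≤ s := Real.sqrt_nonneg n
  have hs2 : 2 ≤ s := by nlinarith
  -- the failure probability is at most `1 / n`, hence at most `1 / s`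
  have hdel : n * (16 / 27 : ℝ) ^ (2 ^ e) ≤ 1 / s := by
    rw [le_div_iff₀ (by linarith)]
    have hsn : s ≤ n := by nlinarith
    calc n * (16 / 27 : ℝ) ^ (2 ^ e) * s ≤ n * (16 / 27 : ℝ) ^ (2 ^ e) * n := by gcongr
      _ = n ^ 2 * (16 / 27 : ℝ) ^ (2 ^ e) := by ring
      _ ≤ 1 := hr
  have h1s : 1 / s ≤ 1 / 2 := one_div_le_one_div_of_le (by norm_num) hs2
  have hFc : (2 : ℝ) ^ (2 ^ d) * (1 - 1 / s) ≤ (F.card : ℝ) := by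
    refine le_trans ?_ hfar
    gcongr
  have hT : (0 : ℝ) < 2 ^ (2 ^ d) := by positivity
  have hF0 : (0 : ℝ) < F.card := by
    refine lt_of_lt_of_le (mul_pos hT ?_) hFc
    linarith
  have hD1 : ∑ z : (Fin d → ZMod 2) → Bool,
      (if FarFromPeriodic z then 1 / (F.card : ℝ) else 0) = 1 := by
    rw [← Finset.sum_filter, Finset.sum_const, nsmul_eq_mul]
    exact mul_one_div_cancel hF0.ne'
  have hD0 : ∑ z, perDist d z = 1 := sum_perDist_univ (by omega)
  have hp0 : ∀ z, 0 ≤ perDist d z := by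
    intro z
    unfold perDist
    refine div_nonneg (Finset.sum_nonneg fun _ _ => by positivity) (mul_nonneg ?_ hT.le)
    linarith
  refine ⟨fun z => if FarFromPeriodic z then 1 / (F.card : ℝ) else 0, perDist d, ?_, hD1, hp0, hD0,
    ?_, fun z hz => perDist_periodic hz, ?_⟩
  · intro z
    dsimp only
    split_ifs <;> positivity
  · intro z hz
    by_contra h
    exact hz (if_neg h)
  intro w pts hp bits
  have hA0 : 0 ≤ ∑ z ∈ Finset.univ.filter
      (fun z : (Fin d → ZMod 2) → Bool => ∀ j, z (pts j) = bits j),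
      (if FarFromPeriodic z then 1 / (F.card : ℝ) else 0) :=
    Finset.sum_nonneg fun z _ => by split_ifs <;> positivity
  have hw : (w : ℝ) / (s / 2) = 2 * w / s := by field_simp
  rw [hw]
  rcases Nat.eq_zero_or_pos w with rfl | hw0
  · have he : (Finset.univ.filter
        (fun z : (Fin d → ZMod 2) → Bool => ∀ j, z (pts j) = bits j)) = Finset.univ :=
      Finset.filter_true_of_mem fun z _ j => j.elim0
    rw [he, hD1, hD0]
    simp
  have hw1 : (1 : ℝ) ≤ w := by exact_mod_cast hw0
  rcases le_or_gt s (2 * w) with hbig | hsmall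
  · have h1 : 1 ≤ 2 * (w : ℝ) / s := by rwa [le_div_iff₀ (by linarith), one_mul]
    refine le_trans (mul_nonpos_of_nonpos_of_nonneg (by linarith) hA0) ?_
    exact Finset.sum_nonneg fun z _ => hp0 z
  have hlow := perDist_conj (by omega) hp bits
  refine le_trans ?_ hlow
  have hA : ∑ z ∈ Finset.univ.filter
      (fun z : (Fin d → ZMod 2) → Bool => ∀ j, z (pts j) = bits j),
      (if FarFromPeriodic z then 1 / (F.card : ℝ) else 0) ≤ 1 / (1 - 1 / s) / 2 ^ w := by
    have hc' := card_conj_cube hp bits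
    calc _ ≤ ∑ z ∈ Finset.univ.filter
          (fun z : (Fin d → ZMod 2) → Bool => ∀ j, z (pts j) = bits j), 1 / (F.card : ℝ) := by
          refine Finset.sum_le_sum fun z _ => ?_
          split_ifs
          · exact le_rfl
          · positivity
      _ = 2 ^ (2 ^ d) / 2 ^ w * (1 / (F.card : ℝ)) := by
          rw [Finset.sum_const, nsmul_eq_mul, hc']
      _ ≤ 2 ^ (2 ^ d) / 2 ^ w * (1 / (2 ^ (2 ^ d) * (1 - 1 / s))) := by
          have : 0 < 2 ^ (2 ^ d) * (1 - 1 / s) := mul_pos hT (by linarith)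
          gcongr
      _ = _ := by
          have : (1 - 1 / s) ≠ 0 := by linarith
          field_simp
  have hlt : 2 * (w : ℝ) / s < 1 := by rwa [div_lt_one (by linarith)]
  refine (mul_le_mul_of_nonneg_left hA (by linarith)).trans ?_
  rw [← mul_div_assoc]
  refine div_le_div_of_nonneg_right ?_ (by positivity)
  have hpos : 0 < 1 - 1 / s := by linarith
  -- both sides are compared with `1 - w / s`
  trans 1 - w / s
  · rw [mul_one_div, div_le_iff₀ hpos]
    have h1 : 1 / s ≤ w / s := by gcongr
    have h2 : 2 * (w : ℝ) / s = w / s + w / s := by ring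
    have h3 : 0 ≤ w / s * (1 / s) := by positivity
    rw [h2]
    nlinarith
  · have hn1 : 0 < n - 1 := by linarith
    have h1 : (n - 1 - (w : ℝ) ^ 2) / (n - 1) = 1 - w ^ 2 / (n - 1) := by field_simp
    rw [h1]
    refine sub_le_sub_left ?_ 1
    rw [div_le_div_iff₀ hn1 (by linarith)]
    have h2 : (w : ℝ) * s ≤ n - 1 := by
      have h3 : 2 * (w : ℝ) * s ≤ s * s := mul_le_mul_of_nonneg_right hsmall.le hs0
      linarith
    calc (w : ℝ) ^ 2 * s = w * (w * s) := by ring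
      _ ≤ w * (n - 1) := by gcongr
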